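/- Time reversal of the Brownian bridge: (H_s)_{s∈[0,T]} is a filtration, the process (B̂_s)_{s∈[0,T)} is adapted to it, has continuous paths, satisfies B̂_0 = 0 ℙ-a.s., and is a Brownian motion with respect to (H_s): for all 0 ≤ s ≤ t < T the increment B̂_t − B̂_s is independent of H_s and is a centered Gaussian vector with covariance (t−s)·Id_{ℝ^ν}. Moreover, ℙ-almost surely, b_{T−s} = y + B̂_s + ∫₀^s (x − b_{T−r})/(T−r) dr for all s ∈ [0,T); that is, the time-reversed process (b_{T−s})_{s∈[0,T]} is a semimartingale realization of the Brownian bridge from y to x in time T driven by the Brownian motion B̂. -/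

import Mathlib

open MeasureTheory ProbabilityTheory

/-- A `ν`-dimensional Brownian motion `B` on a filtered probability space
`(Ω, m, (ℱ_t), P)` satisfying the usual conditions: the filtration is complete and
right-continuous, `B` has continuous paths on `[0,∞)` with `B_0 = 0`, `B` is adapted, and
for `0 ≤ s ≤ t` the increment `B_t − B_s` is independent of `ℱ_s` and is a centered
Gaussian vector with covariance matrix `(t−s)·Id` (componentwise iid `N(0, t−s)`). -/
structure IsBrownianMotion {Ω : Type*} [m : MeasurableSpace Ω] (P : Measure Ω) (ν : ℕ)
    (F : Filtration ℝ m) (B : ℝ → Ω → Fin ν → ℝ) : Prop where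
  complete : ∀ (t : ℝ) (A : Set Ω), P A = 0 → MeasurableSet[F t] A
  rightCont : ∀ t : ℝ, (F t : MeasurableSpace Ω) = ⨅ s ∈ Set.Ioi t, (F s : MeasurableSpace Ω)
  contPaths : ∀ ω : Ω, ContinuousOn (fun t => B t ω) (Set.Ici 0)
  start : ∀ ω : Ω, B 0 ω = 0
  adapted : ∀ t : ℝ, Measurable[F t] (B t)
  indepIncr : ∀ s t : ℝ, 0 ≤ s → s ≤ t →
    Indep (MeasurableSpace.comap (fun ω => B t ω - B s ω) inferInstance) (F s) P
  gaussIncr : ∀ s t : ℝ, 0 ≤ s → s ≤ t →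
    Measure.map (fun ω => B t ω - B s ω) P =
      Measure.pi fun _ : Fin ν => gaussianReal 0 (Real.toNNReal (t - s))

/-- The Brownian bridge from `x` to `y` in time `T` driven by the path `B`:
`b_t = (t/T)y + ((T−t)/T)x + B_t − (T−t)∫₀ᵗ (T−s)⁻² B_s ds` for `t < T`, and `b_t = y`
otherwise (in particular `b_T = y`). -/
noncomputable def bridgeBB (ν : ℕ) (T : ℝ) (x y : Fin ν → ℝ) (B : ℝ → Fin ν → ℝ)
    (t : ℝ) : Fin ν → ℝ :=
  if t < T then
    (t / T) • y + ((T - t) / T) • x + B t -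
      (T - t) • ∫ s in (0 : ℝ)..t, ((T - s) ^ 2)⁻¹ • B s
  else y

/-- The process `B̂_s = b_{T−s} − y + ∫_{T−s}^{T} (b_r − x)/r dr` obtained by time reversal
of the Brownian bridge. -/
noncomputable def bridgeHatB (ν : ℕ) (T : ℝ) (x y : Fin ν → ℝ) (B : ℝ → Fin ν → ℝ)
    (s : ℝ) : Fin ν → ℝ :=
  bridgeBB ν T x y B (T - s) - y +
    ∫ r in (T - s)..T, r⁻¹ • (bridgeBB ν T x y B r - x)

/-- `H_s`: the smallest σ-algebra containing all `P`-null sets together with the σ-algebra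
generated by the random vector `b_{T−s}` and the increments `B_T − B_r`, `r ∈ [T−s,T]`. -/
noncomputable def revFiltration {Ω : Type*} [MeasurableSpace Ω] (P : Measure Ω) (ν : ℕ)
    (T : ℝ) (x y : Fin ν → ℝ) (B : ℝ → Ω → Fin ν → ℝ) (s : ℝ) : MeasurableSpace Ω :=
  MeasurableSpace.comap (fun ω => bridgeBB ν T x y (fun u => B u ω) (T - s)) inferInstance ⊔
    (⨆ r ∈ Set.Icc (T - s) T,
      MeasurableSpace.comap (fun ω => B T ω - B r ω) inferInstance) ⊔
    MeasurableSpace.generateFrom {A : Set Ω | P A = 0}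

/-!
Put `M_r = ∫₀ʳ (T - s)⁻¹ dB_s`. This process has independent centered Gaussian increments with
variance function `(T - r)⁻¹ - T⁻¹`, and `b_r = (r/T) y + ((T - r)/T) x + (T - r) M_r`. Hence, for
`u = T - s` and `w = T - t`, the increment `D = B̂_t - B̂_s` is a multiple of `M_w` plus a Wiener
integral over `[w, u]` of an explicit smooth kernel against `M`, and so is `⟨l, D⟩ + ⟨l', M_u⟩` for
all vectors `l` and `l'`. Its variance can be integrated in closed form to
`(t - s) ‖l‖² + (s⁻¹ - T⁻¹) ‖l'‖²`, so `D` has covariance `(t - s) Id` and is independent of `M_u`,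
that is, of `b_{T-s}` (for `s = 0`, where `M_T` is not defined, `b_T = y` is constant). As `D` and
`b_{T-s}` depend only on the past of `B` up to time `T - s`, the increments of `B` after that time
are jointly independent of the pair `(D, b_{T-s})`, and `D` is independent of `H_s`.

Adaptedness and monotonicity of `H` hold because on `[T - t, T]` the bridge is a function of
`b_{T-t}` and of the increments of `B` after `T - t`. Since the integrands are smooth, every Wiener
integral can be taken pathwise, by parts, as a limit of Riemann–Stieltjes sums.
-/

section Independence

variable {Ω : Type*} {A₁ A₂ G m : MeasurableSpace Ω} {P : Measure[m] Ω}

theorem isPiSystem_image2_inter (A₁ A₂ : MeasurableSpace Ω) :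
    IsPiSystem (Set.image2 (· ∩ ·) {s | MeasurableSet[A₁] s} {t | MeasurableSet[A₂] t}) := by
  rintro _ ⟨s, hs, t, ht, rfl⟩ _ ⟨s', hs', t', ht', rfl⟩ -
  exact ⟨s ∩ s', MeasurableSet.inter hs hs', t ∩ t', MeasurableSet.inter ht ht',
    Set.inter_inter_inter_comm ..⟩

theorem sup_eq_generateFrom_image2_inter (A₁ A₂ : MeasurableSpace Ω) :
    A₁ ⊔ A₂ = MeasurableSpace.generateFrom
      (Set.image2 (· ∩ ·) {s | MeasurableSet[A₁] s} {t | MeasurableSet[A₂] t}) := by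
  refine le_antisymm (sup_le ?_ ?_) (MeasurableSpace.generateFrom_le ?_)
  · exact fun s hs ↦ MeasurableSpace.measurableSet_generateFrom
      ⟨s, hs, Set.univ, MeasurableSet.univ, Set.inter_univ s⟩
  · exact fun t ht ↦ MeasurableSpace.measurableSet_generateFrom
      ⟨Set.univ, MeasurableSet.univ, t, ht, Set.univ_inter t⟩
  · rintro _ ⟨s, hs, t, ht, rfl⟩
    exact MeasurableSet.inter ((le_sup_left : A₁ ≤ A₁ ⊔ A₂) s hs)
      ((le_sup_right : A₂ ≤ A₁ ⊔ A₂) t ht)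

theorem indep_sup_left_of_indep_sup_right [IsZeroOrProbabilityMeasure P] (hA₁ : A₁ ≤ m)
    (hA₂ : A₂ ≤ m) (hG : G ≤ m) (h₁ : Indep A₁ G P) (h₂ : Indep A₂ (A₁ ⊔ G) P) :
    Indep (A₁ ⊔ A₂) G P := by
  refine IndepSets.indep (sup_le hA₁ hA₂) hG (isPiSystem_image2_inter A₁ A₂)
    (@MeasurableSpace.isPiSystem_measurableSet _ G) (sup_eq_generateFrom_image2_inter A₁ A₂)
    (@MeasurableSpace.generateFrom_measurableSet _ G).symm ?_
  rw [IndepSets_iff]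
  rintro _ g ⟨s, hs, t, ht, rfl⟩ hg
  rw [Indep_iff] at h₁ h₂
  have hs' : MeasurableSet[A₁ ⊔ G] s := (le_sup_left : A₁ ≤ A₁ ⊔ G) s hs
  have hg' : MeasurableSet[A₁ ⊔ G] g := (le_sup_right : G ≤ A₁ ⊔ G) g hg
  calc P (s ∩ t ∩ g) = P (t ∩ (s ∩ g)) := by rw [Set.inter_comm s t, Set.inter_assoc]
    _ = P t * P s * P g := by rw [h₂ t (s ∩ g) ht (hs'.inter hg'), h₁ s g hs hg, mul_assoc]
    _ = P (s ∩ t) * P g := by rw [← h₂ t s ht hs', Set.inter_comm]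

theorem indep_generateFrom_null [IsZeroOrProbabilityMeasure P]
    (hN : MeasurableSpace.generateFrom {A : Set Ω | P A = 0} ≤ m) (hG : G ≤ m) :
    Indep (MeasurableSpace.generateFrom {A : Set Ω | P A = 0}) G P := by
  have hpi : IsPiSystem {A : Set Ω | P A = 0} :=
    fun s (hs : P s = 0) _ _ _ ↦ measure_mono_null Set.inter_subset_left hs
  refine IndepSets.indep hN hG hpi (@MeasurableSpace.isPiSystem_measurableSet _ G) rfl
    (@MeasurableSpace.generateFrom_measurableSet _ G).symm ?_
  rw [IndepSets_iff]
  intro s g (hs : P s = 0) _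
  rw [hs, zero_mul]
  exact measure_mono_null Set.inter_subset_left hs

end Independence

section IntegralMeasurability

variable {Ω E : Type*} {mΩ : MeasurableSpace Ω} [NormedAddCommGroup E] [NormedSpace ℝ E]
  [SecondCountableTopology E] [MeasurableSpace E] [BorelSpace E]

theorem measurable_intervalIntegral_of_continuousOn {a b : ℝ} (hab : a ≤ b) {f : ℝ → Ω → E}
    (hf : ∀ r ∈ Set.Icc a b, Measurable (f r))
    (hcont : ∀ ω, ContinuousOn (fun r ↦ f r ω) (Set.Icc a b)) :
    Measurable fun ω ↦ ∫ r in a..b, f r ω := by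
  let g : ℝ → Ω → E := fun r ↦ f (Set.projIcc a b hab r)
  have hgf (ω : Ω) : ∫ r in a..b, f r ω = ∫ r in a..b, g r ω :=
    intervalIntegral.integral_congr fun r hr ↦ by
      simp only [g, Set.projIcc_of_mem hab (Set.uIcc_of_le hab ▸ hr)]
  have hg : Measurable (Function.uncurry g) :=
    measurable_uncurry_of_continuous_of_measurable
      (fun ω ↦ (hcont ω).domRestrict.comp continuous_projIcc) fun r ↦ hf _ (Subtype.mem _)
  simp only [hgf, intervalIntegral.integral_of_le hab]
  exact (hg.stronglyMeasurable.integral_prod_left (μ := volume.restrict (Set.Ioc a b))).measurable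

end IntegralMeasurability

section RiemannStieltjes

open Filter Topology

/-- The `k`-th node of the partition of `[a, b]` into `n + 1` pieces of equal length. -/
noncomputable def uniformNode (a b : ℝ) (n k : ℕ) : ℝ :=
  a + k * ((b - a) / (n + 1))

section Partition

variable {a b : ℝ} {n k l : ℕ}

@[simp]
theorem uniformNode_zero : uniformNode a b n 0 = a := by simp [uniformNode]

@[simp]
theorem uniformNode_last : uniformNode a b n (n + 1) = b := by
  simp only [uniformNode, Nat.cast_add, Nat.cast_one]
  field_simp
  ring

theorem uniformNode_succ_sub :
    uniformNode a b n (k + 1) - uniformNode a b n k = (b - a) / (n + 1) := by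
  simp only [uniformNode, Nat.cast_add, Nat.cast_one]
  ring

theorem monotone_uniformNode (hab : a ≤ b) : Monotone (uniformNode a b n) :=
  monotone_nat_of_le_succ fun k ↦ by
    have : 0 ≤ (b - a) / (n + 1) := div_nonneg (sub_nonneg.2 hab) (by positivity)
    linarith [uniformNode_succ_sub (a := a) (b := b) (n := n) (k := k)]

theorem uniformNode_mem_Icc (hab : a ≤ b) (hk : k ≤ n + 1) : uniformNode a b n k ∈ Set.Icc a b :=
  ⟨by simpa using monotone_uniformNode hab (n := n) (Nat.zero_le k),
    by simpa using monotone_uniformNode hab (n := n) hk⟩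

theorem Icc_uniformNode_subset (hab : a ≤ b) (hk : k < n + 1) :
    Set.Icc (uniformNode a b n k) (uniformNode a b n (k + 1)) ⊆ Set.Icc a b :=
  Set.Icc_subset_Icc (uniformNode_mem_Icc hab hk.le).1 (uniformNode_mem_Icc hab hk).2

theorem sum_integral_uniformNode {F : Type*} [NormedAddCommGroup F] [NormedSpace ℝ F]
    (hab : a ≤ b) {f : ℝ → F} (hf : ContinuousOn f (Set.Icc a b)) :
    ∑ k ∈ Finset.range (n + 1), ∫ s in uniformNode a b n k..uniformNode a b n (k + 1), f s =
      ∫ s in a..b, f s := by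
  rw [intervalIntegral.sum_integral_adjacent_intervals fun k hk ↦
    (hf.mono (Icc_uniformNode_subset hab hk)).intervalIntegrable_of_Icc
      (monotone_uniformNode hab k.le_succ), uniformNode_zero, uniformNode_last]

end Partition

section SampledIntegrand

variable {F : Type*} [NormedAddCommGroup F] [NormedSpace ℝ F] {a b : ℝ}

theorem norm_sum_integral_uniformNode_sub_integral_le (hab : a ≤ b) {Φ : ℝ → ℝ → F} {ε : ℝ}
    {n : ℕ} {τ : ℕ → ℝ}
    (hΦ : ContinuousOn (Function.uncurry Φ) (Set.Icc a b ×ˢ Set.Icc a b))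
    (hτ : ∀ k < n + 1, τ k ∈ Set.Icc a b)
    (hε : ∀ k < n + 1, ∀ s ∈ Set.Icc (uniformNode a b n k) (uniformNode a b n (k + 1)),
      ‖Φ s (τ k) - Φ s s‖ ≤ ε) :
    ‖∑ k ∈ Finset.range (n + 1),
        (∫ s in uniformNode a b n k..uniformNode a b n (k + 1), Φ s (τ k)) -
      ∫ s in a..b, Φ s s‖ ≤ ε * (b - a) := by
  have hdiag : ContinuousOn (fun s ↦ Φ s s) (Set.Icc a b) :=
    hΦ.comp (f := fun s : ℝ ↦ (s, s)) (by fun_prop) fun s hs ↦ ⟨hs, hs⟩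
  have hslice (k) (hk : k < n + 1) : ContinuousOn (fun s ↦ Φ s (τ k)) (Set.Icc a b) :=
    hΦ.comp (f := fun s : ℝ ↦ (s, τ k)) (by fun_prop) fun s hs ↦ ⟨hs, hτ k hk⟩
  have hint {f : ℝ → F} (hf : ContinuousOn f (Set.Icc a b)) (k) (hk : k < n + 1) :
      IntervalIntegrable f volume (uniformNode a b n k) (uniformNode a b n (k + 1)) :=
    (hf.mono (Icc_uniformNode_subset hab hk)).intervalIntegrable_of_Icc
      (monotone_uniformNode hab k.le_succ)
  rw [← sum_integral_uniformNode hab hdiag, ← Finset.sum_sub_distrib]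
  calc ‖∑ k ∈ Finset.range (n + 1),
        ((∫ s in uniformNode a b n k..uniformNode a b n (k + 1), Φ s (τ k)) -
          ∫ s in uniformNode a b n k..uniformNode a b n (k + 1), Φ s s)‖
      ≤ ∑ k ∈ Finset.range (n + 1), ε * ((b - a) / (n + 1)) := by
        refine norm_sum_le_of_le _ fun k hk ↦ ?_
        have hk := Finset.mem_range.1 hk
        have hle := monotone_uniformNode (n := n) hab k.le_succ
        rw [← intervalIntegral.integral_sub (hint (hslice k hk) k hk) (hint hdiag k hk),
          ← uniformNode_succ_sub (k := k), ← abs_of_nonneg (sub_nonneg.2 hle)]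
        refine intervalIntegral.norm_integral_le_of_norm_le_const fun s hs ↦ ?_
        rw [Set.uIoc_of_le hle] at hs
        exact hε k hk s (Set.Ioc_subset_Icc_self hs)
    _ = ε * (b - a) := by
        simp only [Finset.sum_const, Finset.card_range, nsmul_eq_mul, Nat.cast_add, Nat.cast_one]
        field_simp

theorem tendsto_sum_integral_uniformNode (hab : a ≤ b) {Φ : ℝ → ℝ → F}
    (hΦ : ContinuousOn (Function.uncurry Φ) (Set.Icc a b ×ˢ Set.Icc a b)) {τ : ℕ → ℕ → ℝ}
    (hτ : ∀ n, ∀ k < n + 1,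
      τ n k ∈ Set.Icc (uniformNode a b n k) (uniformNode a b n (k + 1))) :
    Tendsto (fun n ↦ ∑ k ∈ Finset.range (n + 1),
      ∫ s in uniformNode a b n k..uniformNode a b n (k + 1), Φ s (τ n k)) atTop
      (𝓝 (∫ s in a..b, Φ s s)) := by
  rw [Metric.tendsto_atTop]
  intro ε hε
  have hη : 0 < ε / (b - a + 1) := div_pos hε (by linarith)
  obtain ⟨δ, hδ, hunif⟩ := Metric.uniformContinuousOn_iff.1
    ((isCompact_Icc.prod isCompact_Icc).uniformContinuousOn_of_continuous hΦ) _ hη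
  have hmesh : Tendsto (fun n : ℕ ↦ (b - a) / ((n : ℝ) + 1)) atTop (𝓝 0) :=
    tendsto_const_nhds.div_atTop (tendsto_natCast_atTop_atTop.atTop_add tendsto_const_nhds)
  obtain ⟨N, hN⟩ := (hmesh.eventually (gt_mem_nhds hδ)).exists_forall_of_atTop
  refine ⟨N, fun n hn ↦ ?_⟩
  rw [dist_eq_norm]
  refine (norm_sum_integral_uniformNode_sub_integral_le hab hΦ
    (fun k hk ↦ Icc_uniformNode_subset hab hk (hτ n k hk)) fun k hk s hs ↦ ?_).trans_lt
      (?_ : ε / (b - a + 1) * (b - a) < ε)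
  · have hsI := Icc_uniformNode_subset hab hk hs
    have hτs : dist (τ n k) s < δ :=
      (Real.dist_le_of_mem_Icc (hτ n k hk) hs).trans_lt (uniformNode_succ_sub.trans_lt (hN n hn))
    rw [← dist_eq_norm]
    refine (hunif (s, τ n k) ⟨hsI, Icc_uniformNode_subset hab hk (hτ n k hk)⟩ (s, s) ⟨hsI, hsI⟩
      ?_).le
    simpa [Prod.dist_eq, hδ] using hτs
  · rw [div_mul_eq_mul_div, div_lt_iff₀ (by linarith)]
    nlinarith

end SampledIntegrand

end RiemannStieltjes

section ByParts

open Filter Topology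

/-- The Riemann–Stieltjes integral over `[u, v]` of a functional-valued integrand `A` with
continuous derivative `A'` against a path `β`. It is defined by integration by parts, so `β` need
not have bounded variation. -/
noncomputable def stieltjesByParts {E : Type*} [NormedAddCommGroup E] [NormedSpace ℝ E]
    (A A' : ℝ → StrongDual ℝ E) (β : ℝ → E) (u v : ℝ) : ℝ :=
  A v (β v) - A u (β u) - ∫ s in u..v, A' s (β s)

variable {E : Type*} [NormedAddCommGroup E] [NormedSpace ℝ E]

theorem sum_apply_sub_eq_sub_sum_sub_apply (A : ℕ → StrongDual ℝ E) (β : ℕ → E) (N : ℕ) :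
    ∑ k ∈ Finset.range N, A k (β (k + 1) - β k) =
      A N (β N) - A 0 (β 0) - ∑ k ∈ Finset.range N, (A (k + 1) - A k) (β (k + 1)) := by
  rw [← Finset.sum_range_sub fun k ↦ A k (β k), ← Finset.sum_sub_distrib]
  refine Finset.sum_congr rfl fun k _ ↦ ?_
  simp only [map_sub, sub_apply]
  ring

theorem integral_deriv_apply_eq_sub {A A' : ℝ → StrongDual ℝ E} {u v : ℝ} (huv : u ≤ v)
    (hA : ∀ s ∈ Set.Icc u v, HasDerivAt A (A' s) s) (hA' : ContinuousOn A' (Set.Icc u v)) (z : E) :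
    ∫ s in u..v, A' s z = (A v - A u) z := by
  rw [intervalIntegral.integral_eq_sub_of_hasDerivAt (f := fun s ↦ A s z)
    (fun s hs ↦ by
      simpa using (hA s (Set.uIcc_of_le huv ▸ hs)).clm_apply (hasDerivAt_const s z))
    ((hA'.clm_apply continuousOn_const).intervalIntegrable_of_Icc huv), sub_apply]

theorem tendsto_sum_stieltjesByParts {A A' : ℝ → StrongDual ℝ E} {β : ℝ → E} {u v : ℝ}
    (huv : u ≤ v) (hA : ∀ s ∈ Set.Icc u v, HasDerivAt A (A' s) s)
    (hA' : ContinuousOn A' (Set.Icc u v)) (hβ : ContinuousOn β (Set.Icc u v)) :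
    Tendsto (fun n ↦ ∑ k ∈ Finset.range (n + 1),
      A (uniformNode u v n k) (β (uniformNode u v n (k + 1)) - β (uniformNode u v n k))) atTop
      (𝓝 (stieltjesByParts A A' β u v)) := by
  have hlim := tendsto_sum_integral_uniformNode huv (Φ := fun s t ↦ A' s (β t))
    (τ := fun n k ↦ uniformNode u v n (k + 1))
    ((hA'.comp continuousOn_fst fun p hp ↦ hp.1).clm_apply
      (hβ.comp continuousOn_snd fun p hp ↦ hp.2))
    fun n k _ ↦ Set.right_mem_Icc.2 (monotone_uniformNode huv k.le_succ)
  refine (hlim.const_sub (A v (β v) - A u (β u))).congr fun n ↦ ?_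
  rw [sum_apply_sub_eq_sub_sum_sub_apply (fun k ↦ A (uniformNode u v n k))
    (fun k ↦ β (uniformNode u v n k)), uniformNode_zero, uniformNode_last]
  congr 1
  refine Finset.sum_congr rfl fun k hk ↦ ?_
  have hsub := Icc_uniformNode_subset (n := n) huv (Finset.mem_range.1 hk)
  exact integral_deriv_apply_eq_sub (monotone_uniformNode huv k.le_succ)
    (fun s hs ↦ hA s (hsub hs)) (hA'.mono hsub) _

theorem tendsto_sum_sub_mul_uniformNode {a a' f : ℝ → ℝ} {u v : ℝ} (huv : u ≤ v)
    (ha : ∀ s ∈ Set.Icc u v, HasDerivAt a (a' s) s) (ha' : ContinuousOn a' (Set.Icc u v))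
    (hf : ContinuousOn f (Set.Icc u v)) :
    Tendsto (fun n ↦ ∑ k ∈ Finset.range (n + 1),
      (a (uniformNode u v n (k + 1)) - a (uniformNode u v n k)) * f (uniformNode u v n k)) atTop
      (𝓝 (∫ s in u..v, a' s * f s)) := by
  have hlim := tendsto_sum_integral_uniformNode huv (Φ := fun s t ↦ a' s * f t)
    (τ := uniformNode u v)
    ((ha'.comp continuousOn_fst fun p hp ↦ hp.1).mul (hf.comp continuousOn_snd fun p hp ↦ hp.2))
    fun n k _ ↦ Set.left_mem_Icc.2 (monotone_uniformNode huv k.le_succ)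
  refine hlim.congr fun n ↦ Finset.sum_congr rfl fun k hk ↦ ?_
  have hsub := Icc_uniformNode_subset (n := n) huv (Finset.mem_range.1 hk)
  have hle := monotone_uniformNode (n := n) huv k.le_succ
  rw [intervalIntegral.integral_mul_const, intervalIntegral.integral_eq_sub_of_hasDerivAt
    (fun s hs ↦ ha s (hsub (Set.uIcc_of_le hle ▸ hs)))
    ((ha'.mono hsub).intervalIntegrable_of_Icc hle)]

end ByParts

section CharacteristicFunctions

open Filter Topology

variable {ι : Type*} [Fintype ι] [DecidableEq ι]

/-- The variance of the linear functional `L` under the standard Gaussian measure on `ι → ℝ`. -/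
noncomputable def gaussianVariance (L : StrongDual ℝ (ι → ℝ)) : ℝ :=
  ∑ i, L (Pi.single i 1) ^ 2

@[simp]
theorem gaussianVariance_zero : gaussianVariance (0 : StrongDual ℝ (ι → ℝ)) = 0 := by
  simp [gaussianVariance]

theorem gaussianVariance_smul (c : ℝ) (L : StrongDual ℝ (ι → ℝ)) :
    gaussianVariance (c • L) = c ^ 2 * gaussianVariance L := by
  simp [gaussianVariance, Finset.mul_sum, mul_pow]

@[fun_prop]
theorem continuous_gaussianVariance :
    Continuous (gaussianVariance : StrongDual ℝ (ι → ℝ) → ℝ) := by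
  unfold gaussianVariance
  fun_prop

theorem charFunDual_gaussianReal_zero (v : NNReal) (L : StrongDual ℝ ℝ) :
    charFunDual (gaussianReal 0 v) L = Complex.exp (-(v * L 1 ^ 2 / 2) : ℝ) := by
  have hL : L = InnerProductSpace.toDualMap ℝ ℝ (L 1) := by
    ext
    simp
  rw [hL, ← charFun_eq_charFunDual_toDualMap, charFun_gaussianReal]
  simp

theorem charFunDual_pi_gaussianReal_zero (v : NNReal) (L : StrongDual ℝ (ι → ℝ)) :
    charFunDual (Measure.pi fun _ : ι ↦ gaussianReal 0 v) L =
      Complex.exp (-(v * gaussianVariance L / 2) : ℝ) := by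
  simp only [charFunDual_pi, charFunDual_gaussianReal_zero, ← Complex.exp_sum,
    ← Complex.ofReal_sum, gaussianVariance, Finset.mul_sum, Finset.sum_div,
    Finset.sum_neg_distrib]
  simp

variable {Ω : Type*} {m : MeasurableSpace Ω} {P : Measure Ω}

theorem charFunDual_map_eq_integral_probChar {E : Type*} [NormedAddCommGroup E] [NormedSpace ℝ E]
    [MeasurableSpace E] [OpensMeasurableSpace E] {X : Ω → E} (hX : AEMeasurable X P)
    (L : StrongDual ℝ E) : charFunDual (P.map X) L = ∫ ω, (Real.probChar (L (X ω)) : ℂ) ∂P := by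
  simp only [charFunDual_apply, Real.probChar_apply]
  exact integral_map hX (by fun_prop)

theorem map_eq_pi_gaussianReal_of_integral_probChar [IsProbabilityMeasure P] {X : Ω → ι → ℝ}
    (hX : Measurable X) {c : ℝ} (hc : 0 ≤ c)
    (h : ∀ L : StrongDual ℝ (ι → ℝ), ∫ ω, (Real.probChar (L (X ω)) : ℂ) ∂P =
      Complex.exp (-(c * gaussianVariance L / 2) : ℝ)) :
    P.map X = Measure.pi fun _ : ι ↦ gaussianReal 0 c.toNNReal := by
  have := Measure.isProbabilityMeasure_map (μ := P) hX.aemeasurable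
  refine Measure.ext_of_charFunDual (funext fun L ↦ ?_)
  rw [charFunDual_map_eq_integral_probChar hX.aemeasurable, h, charFunDual_pi_gaussianReal_zero,
    Real.coe_toNNReal c hc]

theorem indepFun_of_integral_probChar_add {E E' : Type*} [NormedAddCommGroup E] [NormedSpace ℝ E]
    [CompleteSpace E] [SecondCountableTopology E] [MeasurableSpace E] [BorelSpace E]
    [NormedAddCommGroup E'] [NormedSpace ℝ E'] [CompleteSpace E'] [SecondCountableTopology E']
    [MeasurableSpace E'] [BorelSpace E'] [IsProbabilityMeasure P] {X : Ω → E} {Y : Ω → E'}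
    (hX : Measurable X) (hY : Measurable Y)
    (h : ∀ (L : StrongDual ℝ E) (L' : StrongDual ℝ E'),
      ∫ ω, (Real.probChar (L (X ω) + L' (Y ω)) : ℂ) ∂P =
        (∫ ω, (Real.probChar (L (X ω)) : ℂ) ∂P) * ∫ ω, (Real.probChar (L' (Y ω)) : ℂ) ∂P) :
    IndepFun X Y P := by
  rw [indepFun_iff_charFunDual_prod hX.aemeasurable hY.aemeasurable]
  intro L
  have hsplit (ω : Ω) : L (X ω, Y ω) =
      (L.comp (.inl ℝ E E')) (X ω) + (L.comp (.inr ℝ E E')) (Y ω) := by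
    rw [ContinuousLinearMap.comp_apply, ContinuousLinearMap.comp_apply, ← map_add]
    simp
  simp only [charFunDual_map_eq_integral_probChar (hX.prodMk hY).aemeasurable,
    charFunDual_map_eq_integral_probChar hX.aemeasurable,
    charFunDual_map_eq_integral_probChar hY.aemeasurable, hsplit, h]

theorem tendsto_integral_probChar_mul [IsFiniteMeasure P] {κ : Type*} {l : Filter κ}
    [l.IsCountablyGenerated] {X : κ → Ω → ℝ} {Y : Ω → ℝ} {Z : Ω → ℂ}
    (hX : ∀ᶠ n in l, Measurable (X n)) (hZ : Measurable Z) (hZ_le : ∀ ω, ‖Z ω‖ ≤ 1)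
    (hlim : ∀ ω, Tendsto (fun n ↦ X n ω) l (𝓝 (Y ω))) :
    Tendsto (fun n ↦ ∫ ω, Real.probChar (X n ω) * Z ω ∂P) l
      (𝓝 (∫ ω, Real.probChar (Y ω) * Z ω ∂P)) := by
  have hcont : Continuous fun z : ℝ ↦ (Real.probChar z : ℂ) := by fun_prop
  refine tendsto_integral_filter_of_dominated_convergence (fun _ ↦ 1)
    (hX.mono fun n hXn ↦ ((hcont.measurable.comp hXn).mul hZ).aestronglyMeasurable)
    (.of_forall fun n ↦ ae_of_all P fun ω ↦ ?_) (integrable_const 1)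
    (ae_of_all P fun ω ↦ ((hcont.tendsto _).comp (hlim ω)).mul_const _)
  simpa only [norm_mul, Circle.norm_coe, one_mul] using hZ_le ω

end CharacteristicFunctions

section GaussianIncrements

open Filter Topology

variable {Ω : Type*} {m : MeasurableSpace Ω} {ι : Type*} [Fintype ι] [DecidableEq ι]

/-- On the time set `I`, the process `X` is continuous, `F`-adapted, and has for `s ≤ t` an
increment `X t - X s` that is independent of `F s` and centered Gaussian with covariance
`(a t - a s) • Id`. Law and independence are encoded together, as a conditional characteristic
function: this form passes to limits and to linear combinations of successive increments. -/
structure HasGaussianIncrements (P : Measure Ω) (F : Filtration ℝ m) (X : ℝ → Ω → ι → ℝ)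
    (a : ℝ → ℝ) (I : Set ℝ) : Prop where
  continuousOn : ∀ ω, ContinuousOn (fun t ↦ X t ω) I
  adapted : ∀ t ∈ I, Measurable[F t] (X t)
  integral_probChar_mul : ∀ s ∈ I, ∀ t ∈ I, s ≤ t → ∀ (L : StrongDual ℝ (ι → ℝ)) (Z : Ω → ℂ),
    Measurable[F s] Z → (∀ ω, ‖Z ω‖ ≤ 1) →
    ∫ ω, Real.probChar (L (X t ω - X s ω)) * Z ω ∂P =
      Complex.exp (-((a t - a s) * gaussianVariance L / 2) : ℝ) * ∫ ω, Z ω ∂P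

namespace HasGaussianIncrements

variable {P : Measure Ω} {F : Filtration ℝ m} {X : ℝ → Ω → ι → ℝ} {a : ℝ → ℝ} {I : Set ℝ}

theorem measurable_of_le (h : HasGaussianIncrements P F X a I) {s t : ℝ} (hs : s ∈ I)
    (hst : s ≤ t) : Measurable[F t] (X s) :=
  (h.adapted s hs).mono (F.mono hst) le_rfl

theorem measurable (h : HasGaussianIncrements P F X a I) {s : ℝ} (hs : s ∈ I) :
    Measurable (X s) :=
  (h.adapted s hs).mono (F.le s) le_rfl

theorem measurable_sum (h : HasGaussianIncrements P F X a I) {r : ℕ → ℝ} (hr : Monotone r)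
    {N : ℕ} (hrI : ∀ k ≤ N, r k ∈ I) (A : ℕ → StrongDual ℝ (ι → ℝ)) :
    Measurable[F (r N)]
      fun ω ↦ ∑ k ∈ Finset.range N, A k (X (r (k + 1)) ω - X (r k) ω) := by
  refine Finset.measurable_sum _ fun k hk ↦ (A k).continuous.measurable.comp ?_
  have hk := Finset.mem_range.1 hk
  exact (h.measurable_of_le (hrI _ hk) (hr hk)).sub (h.measurable_of_le (hrI k hk.le) (hr hk.le))

theorem integral_probChar_sum_mul (h : HasGaussianIncrements P F X a I) {r : ℕ → ℝ}
    (hr : Monotone r) {N : ℕ} (hrI : ∀ k ≤ N, r k ∈ I) (A : ℕ → StrongDual ℝ (ι → ℝ)) {Z : Ω → ℂ}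
    (hZ : Measurable[F (r 0)] Z) (hZ_le : ∀ ω, ‖Z ω‖ ≤ 1) :
    ∫ ω, Real.probChar (∑ k ∈ Finset.range N, A k (X (r (k + 1)) ω - X (r k) ω)) * Z ω ∂P =
      Complex.exp (-((∑ k ∈ Finset.range N,
        (a (r (k + 1)) - a (r k)) * gaussianVariance (A k)) / 2) : ℝ) * ∫ ω, Z ω ∂P := by
  induction N with
  | zero => simp
  | succ N ih =>
    have hsum := h.measurable_sum hr (fun k hk ↦ hrI k (hk.trans N.le_succ)) A
    have hcont : Continuous fun z : ℝ ↦ (Real.probChar z : ℂ) := by fun_prop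
    simp only [Finset.sum_range_succ_comm _ N, AddChar.map_add_eq_mul, Circle.coe_mul, mul_assoc]
    rw [h.integral_probChar_mul _ (hrI N N.le_succ) _ (hrI (N + 1) le_rfl) (hr N.le_succ),
      ih fun k hk ↦ hrI k (hk.trans N.le_succ), ← mul_assoc, ← Complex.exp_add]
    · congr 2
      push_cast
      ring
    · exact (hcont.measurable.comp hsum).mul (hZ.mono (F.mono (hr N.zero_le)) le_rfl)
    · simpa only [norm_mul, Circle.norm_coe, one_mul] using hZ_le

theorem integral_probChar_stieltjesByParts_mul [IsFiniteMeasure P]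
    (h : HasGaussianIncrements P F X a I) {A A' : ℝ → StrongDual ℝ (ι → ℝ)} {a' : ℝ → ℝ} {u v : ℝ}
    (huv : u ≤ v) (hI : Set.Icc u v ⊆ I)
    (hA : ∀ s ∈ Set.Icc u v, HasDerivAt A (A' s) s) (hA' : ContinuousOn A' (Set.Icc u v))
    (ha : ∀ s ∈ Set.Icc u v, HasDerivAt a (a' s) s) (ha' : ContinuousOn a' (Set.Icc u v))
    {Z : Ω → ℂ} (hZ : Measurable[F u] Z) (hZ_le : ∀ ω, ‖Z ω‖ ≤ 1) :
    ∫ ω, Real.probChar (stieltjesByParts A A' (fun s ↦ X s ω) u v) * Z ω ∂P =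
      Complex.exp (-((∫ s in u..v, a' s * gaussianVariance (A s)) / 2) : ℝ) * ∫ ω, Z ω ∂P := by
  have hnode (n k) (hk : k ≤ n + 1) : uniformNode u v n k ∈ I := hI (uniformNode_mem_Icc huv hk)
  have hr (n : ℕ) := monotone_uniformNode (n := n) huv
  have hmeas (n : ℕ) := (h.measurable_sum (hr n) (hnode n) fun k ↦ A (uniformNode u v n k)).mono
    (F.le _) le_rfl
  have hlim (ω : Ω) := tendsto_sum_stieltjesByParts huv hA hA' ((h.continuousOn ω).mono hI)
  have hcf := tendsto_integral_probChar_mul (P := P) (.of_forall hmeas)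
    (hZ.mono (F.le u) le_rfl) hZ_le hlim
  have hvar := tendsto_sum_sub_mul_uniformNode huv ha ha'
    (continuous_gaussianVariance.comp_continuousOn (HasDerivAt.continuousOn hA))
  have hexp : Continuous fun z : ℝ ↦ Complex.exp (-(z / 2) : ℝ) * ∫ ω, Z ω ∂P := by fun_prop
  refine tendsto_nhds_unique hcf (((hexp.tendsto _).comp hvar).congr fun n ↦ ?_)
  exact (h.integral_probChar_sum_mul (hr n) (hnode n) (fun k ↦ A (uniformNode u v n k))
    (by rwa [uniformNode_zero]) hZ_le).symm

end HasGaussianIncrements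

end GaussianIncrements

section BridgeMartingale

open Filter Topology

theorem hasDerivAt_inv_const_sub {T s : ℝ} (hs : s < T) :
    HasDerivAt (fun s ↦ (T - s)⁻¹) ((T - s) ^ 2)⁻¹ s := by
  simpa [neg_div] using ((hasDerivAt_id s).const_sub T).fun_inv (sub_pos.2 hs).ne'

theorem continuousOn_inv_sq_const_sub {T : ℝ} :
    ContinuousOn (fun s ↦ ((T - s) ^ 2)⁻¹) (Set.Iio T) :=
  ContinuousOn.inv₀ (by fun_prop) fun _ hs ↦ pow_ne_zero 2 (sub_pos.2 hs).ne'

theorem integral_inv_sq_const_sub {T u v : ℝ} (huv : u ≤ v) (hv : v < T) :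
    ∫ s in u..v, ((T - s) ^ 2)⁻¹ = (T - v)⁻¹ - (T - u)⁻¹ := by
  refine intervalIntegral.integral_eq_sub_of_hasDerivAt (f := fun s ↦ (T - s)⁻¹)
    (fun s hs ↦ hasDerivAt_inv_const_sub ?_)
    ((continuousOn_inv_sq_const_sub.mono ?_).intervalIntegrable_of_Icc huv)
  · exact (Set.uIcc_of_le huv ▸ hs).2.trans_lt hv
  · exact fun s hs ↦ hs.2.trans_lt hv

variable {E : Type*} [NormedAddCommGroup E] [NormedSpace ℝ E]

theorem intervalIntegrable_inv_sq_smul {T u v : ℝ} (huv : u ≤ v) (hv : v < T) {φ : ℝ → E}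
    (hφ : ContinuousOn φ (Set.Icc u v)) :
    IntervalIntegrable (fun s ↦ ((T - s) ^ 2)⁻¹ • φ s) volume u v :=
  ((continuousOn_inv_sq_const_sub.mono fun _ hs ↦ hs.2.trans_lt hv).smul
    hφ).intervalIntegrable_of_Icc huv

/-- The path `∫₀ʳ (T - s)⁻¹ dβ_s`, integrated by parts. For a Brownian path `β` it is the
martingale part of the bridge divided by `T - r`. -/
noncomputable def bridgeMartingale (T : ℝ) (β : ℝ → E) (r : ℝ) : E :=
  (T - r)⁻¹ • β r - ∫ s in 0..r, ((T - s) ^ 2)⁻¹ • β s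

theorem bridgeMartingale_sub {T u v : ℝ} {β : ℝ → E} (hβ : ContinuousOn β (Set.Ico 0 T))
    (hu : 0 ≤ u) (huv : u ≤ v) (hv : v < T) :
    bridgeMartingale T β v - bridgeMartingale T β u =
      (T - v)⁻¹ • β v - (T - u)⁻¹ • β u - ∫ s in u..v, ((T - s) ^ 2)⁻¹ • β s := by
  have h0u := intervalIntegrable_inv_sq_smul hu (huv.trans_lt hv)
    (hβ.mono fun s hs ↦ ⟨hs.1, by linarith [hs.2]⟩)
  have h_uv := intervalIntegrable_inv_sq_smul huv hv
    (hβ.mono fun s hs ↦ ⟨by linarith [hs.1], by linarith [hs.2]⟩)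
  rw [bridgeMartingale, bridgeMartingale,
    ← intervalIntegral.integral_add_adjacent_intervals h0u h_uv]
  abel

theorem bridgeMartingale_sub_eq_sub_const [CompleteSpace E] {T u v : ℝ} {β : ℝ → E}
    (hβ : ContinuousOn β (Set.Ico 0 T)) (hu : 0 ≤ u) (huv : u ≤ v) (hv : v < T) (c : E) :
    bridgeMartingale T β v - bridgeMartingale T β u =
      (T - v)⁻¹ • (β v - c) - (T - u)⁻¹ • (β u - c) -
        ∫ s in u..v, ((T - s) ^ 2)⁻¹ • (β s - c) := by
  have hφ := intervalIntegrable_inv_sq_smul huv hv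
    (hβ.mono fun s hs ↦ ⟨by linarith [hs.1], by linarith [hs.2]⟩)
  have hc := intervalIntegrable_inv_sq_smul huv hv (continuousOn_const (c := c))
  simp only [bridgeMartingale_sub hβ hu huv hv, smul_sub]
  rw [intervalIntegral.integral_sub hφ hc, intervalIntegral.integral_smul_const,
    integral_inv_sq_const_sub huv hv, sub_smul]
  abel

theorem continuousOn_bridgeMartingale {T : ℝ} {β : ℝ → E} (hβ : ContinuousOn β (Set.Ico 0 T)) :
    ContinuousOn (bridgeMartingale T β) (Set.Ico 0 T) := by
  intro t ht
  obtain ⟨v, htv, hvT⟩ := exists_between ht.2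
  have hv := ht.1.trans htv.le
  have hβv : ContinuousOn β (Set.Icc 0 v) := hβ.mono (Set.Icc_subset_Ico_right hvT)
  have hprim := intervalIntegral.continuousOn_primitive_interval'
    (intervalIntegrable_inv_sq_smul hv hvT hβv) Set.left_mem_uIcc
  rw [Set.uIcc_of_le hv] at hprim
  have hinv : ContinuousOn (fun s ↦ (T - s)⁻¹) (Set.Icc 0 v) :=
    fun s hs ↦ (hasDerivAt_inv_const_sub (hs.2.trans_lt hvT)).continuousAt.continuousWithinAt
  exact ((hinv.smul hβv).sub hprim t ⟨ht.1, htv.le⟩).mono_of_mem_nhdsWithin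
    (mem_of_superset (inter_mem_nhdsWithin _ (Iio_mem_nhds htv)) fun s hs ↦ ⟨hs.1.1, hs.2.le⟩)

theorem apply_bridgeMartingale_sub [CompleteSpace E] {T u v : ℝ} {β : ℝ → E}
    (hβ : ContinuousOn β (Set.Ico 0 T)) (hu : 0 ≤ u) (huv : u ≤ v) (hv : v < T)
    (L : StrongDual ℝ E) :
    L (bridgeMartingale T β v - bridgeMartingale T β u) =
      stieltjesByParts (fun s ↦ (T - s)⁻¹ • L) (fun s ↦ ((T - s) ^ 2)⁻¹ • L) β u v := by
  have hint := intervalIntegrable_inv_sq_smul huv hv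
    (hβ.mono fun s hs ↦ ⟨by linarith [hs.1], by linarith [hs.2]⟩)
  rw [bridgeMartingale_sub hβ hu huv hv, map_sub, ← L.intervalIntegral_comp_comm hint]
  simp only [stieltjesByParts, map_sub, map_smul, FunLike.coe_smul, Pi.smul_apply]

theorem norm_integral_inv_sq_smul_le {T u v ε : ℝ} (huv : u ≤ v) (hv : v < T) {φ : ℝ → E}
    (hφ : ∀ s ∈ Set.Ioc u v, ‖φ s‖ ≤ ε) :
    ‖∫ s in u..v, ((T - s) ^ 2)⁻¹ • φ s‖ ≤ ((T - v)⁻¹ - (T - u)⁻¹) * ε := by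
  rw [← integral_inv_sq_const_sub huv hv, ← intervalIntegral.integral_mul_const]
  refine intervalIntegral.norm_integral_le_of_norm_le huv (Eventually.of_forall fun s hs ↦ ?_)
    (intervalIntegrable_inv_sq_smul huv hv continuousOn_const)
  rw [norm_smul, Real.norm_of_nonneg (by positivity)]
  exact mul_le_mul_of_nonneg_left (hφ s hs) (by positivity)

theorem tendsto_sub_smul_integral_inv_sq_smul {T u : ℝ} (hu : u < T) {φ : ℝ → E}
    (hφ : ContinuousOn φ (Set.Icc u T)) (hφT : φ T = 0) :
    Tendsto (fun v ↦ (T - v) • ∫ s in u..v, ((T - s) ^ 2)⁻¹ • φ s) (𝓝[<] T) (𝓝 0) := by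
  refine NormedAddGroup.tendsto_nhds_zero.2 fun ε hε ↦ ?_
  obtain ⟨c, ⟨huc, hcT⟩, hc⟩ : ∃ c ∈ Set.Ico u T, Set.Ioc c T ⊆ {s | ‖φ s‖ < ε / 2} := by
    have hsmall := (hφ T (Set.right_mem_Icc.2 hu.le)).norm.eventually_lt_const (u := ε / 2)
      (by simpa [hφT] using hε)
    rw [nhdsWithin_Icc_eq_nhdsLE hu] at hsmall
    exact (mem_nhdsLE_iff_exists_mem_Ico_Ioc_subset hu).1 hsmall
  set C := ∫ s in u..c, ((T - s) ^ 2)⁻¹ • φ s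
  have hC : ∀ᶠ v in 𝓝[<] T, (T - v) * ‖C‖ < ε / 2 := by
    have hcont : Continuous fun v ↦ (T - v) * ‖C‖ := by fun_prop
    exact (hcont.tendsto T).mono_left nhdsWithin_le_nhds |>.eventually_lt_const (by simpa)
  filter_upwards [hC, Ioo_mem_nhdsLT hcT] with v hvC ⟨hcv, hvT⟩
  have htail := norm_integral_inv_sq_smul_le hcv.le hvT fun s hs ↦
    (hc ⟨hs.1, hs.2.trans hvT.le⟩).le
  have hTv := sub_pos.2 hvT
  have hTc := inv_pos.2 (sub_pos.2 hcT)
  rw [← intervalIntegral.integral_add_adjacent_intervals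
    (intervalIntegrable_inv_sq_smul huc hcT (hφ.mono (Set.Icc_subset_Icc_right hcT.le)))
    (intervalIntegrable_inv_sq_smul hcv.le hvT (hφ.mono (Set.Icc_subset_Icc huc hvT.le))),
    norm_smul, Real.norm_of_nonneg hTv.le]
  calc (T - v) * ‖C + ∫ s in c..v, ((T - s) ^ 2)⁻¹ • φ s‖
      ≤ (T - v) * (‖C‖ + (T - v)⁻¹ * (ε / 2)) := by
        gcongr
        refine (norm_add_le _ _).trans (add_le_add_right (htail.trans ?_) _)
        gcongr
        linarith
    _ = (T - v) * ‖C‖ + ε / 2 := by field_simp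
    _ < ε := by linarith

theorem tendsto_sub_smul_bridgeMartingale [CompleteSpace E] {T : ℝ} (hT : 0 < T) {β : ℝ → E}
    (hβ : ContinuousOn β (Set.Icc 0 T)) :
    Tendsto (fun v ↦ (T - v) • bridgeMartingale T β v) (𝓝[<] T) (𝓝 0) := by
  have hTlt : Tendsto (fun v ↦ T - v) (𝓝[<] T) (𝓝 0) := by
    have : Continuous fun v ↦ T - v := by fun_prop
    simpa using (this.tendsto T).mono_left nhdsWithin_le_nhds
  have hβT : Tendsto (fun v ↦ β v - β T) (𝓝[<] T) (𝓝 0) := by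
    have := hβ T (Set.right_mem_Icc.2 hT.le)
    rw [continuousWithinAt_Icc_iff_Iic hT, ← continuousWithinAt_Iio_iff_Iic] at this
    exact tendsto_sub_nhds_zero_iff.2 this
  have hint := tendsto_sub_smul_integral_inv_sq_smul hT (hβ.sub continuousOn_const)
    (sub_self (β T))
  have hlim := (hTlt.smul_const (bridgeMartingale T β 0 - T⁻¹ • (β 0 - β T))).add
    (hβT.sub hint)
  rw [zero_smul, sub_zero, add_zero] at hlim
  refine hlim.congr' ?_
  filter_upwards [Ioo_mem_nhdsLT hT] with v hv
  rw [← sub_add_cancel (bridgeMartingale T β v) (bridgeMartingale T β 0),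
    bridgeMartingale_sub_eq_sub_const (hβ.mono Set.Ico_subset_Icc_self) le_rfl hv.1.le hv.2 (β T),
    smul_add, smul_sub _ _ (∫ _ in _..v, _), smul_sub _ _ ((T - 0)⁻¹ • _),
    smul_inv_smul₀ (sub_pos.2 hv.2).ne', sub_zero, smul_sub]
  simp only [Pi.sub_apply]
  abel

end BridgeMartingale

section BridgePaths

open Filter Topology

variable {ν : ℕ} {T : ℝ} {x y : Fin ν → ℝ} {β : ℝ → Fin ν → ℝ}

theorem bridgeBB_of_lt {t : ℝ} (ht : t < T) :
    bridgeBB ν T x y β t =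
      (t / T) • y + ((T - t) / T) • x + (T - t) • bridgeMartingale T β t := by
  rw [bridgeBB, if_pos ht, bridgeMartingale, smul_sub, smul_inv_smul₀ (sub_pos.2 ht).ne']
  abel

theorem bridgeBB_self : bridgeBB ν T x y β T = y := by
  rw [bridgeBB, if_neg (lt_irrefl T)]

theorem continuousOn_bridgeBB (hT : 0 < T) (hβ : ContinuousOn β (Set.Icc 0 T)) :
    ContinuousOn (bridgeBB ν T x y β) (Set.Icc 0 T) := by
  have haff : Continuous fun t ↦ (t / T) • y + ((T - t) / T) • x := by fun_prop
  intro t ht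
  rcases ht.2.lt_or_eq with htT | rfl
  · have hM := continuousOn_bridgeMartingale (hβ.mono Set.Ico_subset_Icc_self)
    have hb : ContinuousOn (bridgeBB ν T x y β) (Set.Ico 0 T) :=
      (haff.continuousOn.add ((continuousOn_const.sub continuousOn_id).smul hM)).congr
        fun s hs ↦ bridgeBB_of_lt hs.2
    exact (hb t ⟨ht.1, htT⟩).mono_of_mem_nhdsWithin
      (mem_of_superset (inter_mem_nhdsWithin _ (Iio_mem_nhds htT)) fun s hs ↦ ⟨hs.1.1, hs.2⟩)
  · rw [continuousWithinAt_Icc_iff_Iic hT, ← continuousWithinAt_Iio_iff_Iic, ContinuousWithinAt,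
      bridgeBB_self]
    have hlim := ((haff.tendsto t).mono_left nhdsWithin_le_nhds).add
      (tendsto_sub_smul_bridgeMartingale hT hβ)
    rw [div_self hT.ne', one_smul, sub_self, zero_div, zero_smul, add_zero, add_zero] at hlim
    exact hlim.congr' (eventually_mem_nhdsWithin.mono fun s hs ↦ (bridgeBB_of_lt hs).symm)

theorem continuousOn_inv_smul_bridgeBB_sub (hT : 0 < T) (hβ : ContinuousOn β (Set.Icc 0 T)) :
    ContinuousOn (fun r ↦ r⁻¹ • (bridgeBB ν T x y β r - x)) (Set.Ioc 0 T) :=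
  (continuousOn_inv₀.mono fun _ hr ↦ hr.1.ne').smul
    (((continuousOn_bridgeBB hT hβ).mono Set.Ioc_subset_Icc_self).sub continuousOn_const)

theorem bridgeHatB_zero : bridgeHatB ν T x y β 0 = 0 := by
  simp [bridgeHatB, bridgeBB_self]

theorem bridgeHatB_sub (hT : 0 < T) (hβ : ContinuousOn β (Set.Icc 0 T)) {s t : ℝ} (hs : 0 ≤ s)
    (hst : s ≤ t) (ht : t < T) :
    bridgeHatB ν T x y β t - bridgeHatB ν T x y β s =
      bridgeBB ν T x y β (T - t) - bridgeBB ν T x y β (T - s) +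
        ∫ r in (T - t)..(T - s), r⁻¹ • (bridgeBB ν T x y β r - x) := by
  have hcont := continuousOn_inv_smul_bridgeBB_sub (x := x) (y := y) hT hβ
  have hts : T - t ≤ T - s := by linarith
  rw [bridgeHatB, bridgeHatB, ← intervalIntegral.integral_add_adjacent_intervals
    ((hcont.mono fun r hr ↦ ⟨by linarith [hr.1], by linarith [hr.2]⟩).intervalIntegrable_of_Icc
      (a := T - t) (b := T - s) hts)
    ((hcont.mono fun r hr ↦ ⟨by linarith [hr.1], hr.2⟩).intervalIntegrable_of_Icc
      (sub_le_self T hs))]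
  abel

theorem continuousOn_bridgeHatB (hT : 0 < T) (hβ : ContinuousOn β (Set.Icc 0 T)) :
    ContinuousOn (bridgeHatB ν T x y β) (Set.Ico 0 T) := by
  intro t ht
  obtain ⟨v, htv, hvT⟩ := exists_between ht.2
  have hmaps : Set.MapsTo (T - ·) (Set.Icc 0 v) (Set.Icc (T - v) T) :=
    fun s hs ↦ ⟨by linarith [hs.2], by linarith [hs.1]⟩
  have hvT' : Set.uIcc (T - v) T = Set.Icc (T - v) T := Set.uIcc_of_le (by linarith [ht.1])
  have hprim := intervalIntegral.continuousOn_primitive_interval_left (μ := volume) (a := T - v)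
    (b := T) (f := fun r ↦ r⁻¹ • (bridgeBB ν T x y β r - x)) <| by
      rw [hvT']
      exact ((continuousOn_inv_smul_bridgeBB_sub hT hβ).mono fun r hr ↦
        ⟨(sub_pos.2 hvT).trans_le hr.1, hr.2⟩).integrableOn_Icc
  rw [hvT'] at hprim
  have hb := (continuousOn_bridgeBB (x := x) (y := y) hT hβ).mono
    (Set.Icc_subset_Icc_left (sub_pos.2 hvT).le)
  have hcont : ContinuousOn (bridgeHatB ν T x y β) (Set.Icc 0 v) :=
    ((hb.sub continuousOn_const).add hprim).comp (by fun_prop) hmaps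
  exact (hcont t ⟨ht.1, htv.le⟩).mono_of_mem_nhdsWithin
    (mem_of_superset (inter_mem_nhdsWithin _ (Iio_mem_nhds htv)) fun s hs ↦ ⟨hs.1.1, hs.2.le⟩)

theorem bridgeBB_eq_add_bridgeHatB_add_integral {s : ℝ} :
    bridgeBB ν T x y β (T - s) = y + bridgeHatB ν T x y β s +
      ∫ r in 0..s, (T - r)⁻¹ • (x - bridgeBB ν T x y β (T - r)) := by
  have hneg (r : ℝ) : r⁻¹ • (x - bridgeBB ν T x y β r) =
      -(r⁻¹ • (bridgeBB ν T x y β r - x)) := by rw [← smul_neg, neg_sub]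
  rw [intervalIntegral.integral_comp_sub_left fun r ↦ r⁻¹ • (x - bridgeBB ν T x y β r),
    sub_zero, bridgeHatB]
  simp only [hneg, intervalIntegral.integral_neg]
  abel

end BridgePaths

section ReversedIntegrand

variable {ν : ℕ} {T : ℝ} {x y : Fin ν → ℝ} {β : ℝ → Fin ν → ℝ} {w u : ℝ}

/-- The kernel `k` such that, for `s = T - u ≤ t = T - w`, the increment `B̂_t - B̂_s` is
`T log (u / w) M_w + ∫_w^u k dM`, where `M` is the `bridgeMartingale` of the driving path. -/
noncomputable def reversalKernel (T u s : ℝ) : ℝ :=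
  T * Real.log (u / s) - (T - s)

theorem hasDerivAt_reversalKernel (hu : 0 < u) {s : ℝ} (hs : 0 < s) :
    HasDerivAt (reversalKernel T u) (-((T - s) / s)) s := by
  have hlog : HasDerivAt (fun s ↦ Real.log (u / s)) (-s⁻¹) s :=
    (((hasDerivAt_const s u).fun_div (hasDerivAt_id' s) hs.ne').log
      (div_pos hu hs).ne').congr_deriv (by field_simp; ring)
  exact ((hlog.const_mul T).fun_sub ((hasDerivAt_id' s).const_sub T)).congr_deriv
    (by field_simp; ring)

theorem continuousOn_sub_div_id : ContinuousOn (fun s ↦ (T - s) / s) (Set.Ioi 0) :=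
  ContinuousOn.div (by fun_prop) continuousOn_id fun _ hs ↦ (Set.mem_Ioi.1 hs).ne'

theorem intervalIntegrable_sub_div_smul_bridgeMartingale (hβ : ContinuousOn β (Set.Ico 0 T))
    (hw : 0 < w) (hwu : w ≤ u) (hu : u < T) :
    IntervalIntegrable (fun r ↦ ((T - r) / r) • bridgeMartingale T β r) volume w u :=
  ((continuousOn_sub_div_id.mono fun _ hr ↦ hw.trans_le hr.1).smul
    ((continuousOn_bridgeMartingale hβ).mono fun _ hr ↦
      ⟨hw.le.trans hr.1, hr.2.trans_lt hu⟩)).intervalIntegrable_of_Icc hwu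

theorem bridgeBB_sub_add_integral_eq (hβ : ContinuousOn β (Set.Ico 0 T)) (hw : 0 < w)
    (hwu : w ≤ u) (hu : u < T) :
    bridgeBB ν T x y β w - bridgeBB ν T x y β u +
        ∫ r in w..u, r⁻¹ • (bridgeBB ν T x y β r - x) =
      (T - w) • bridgeMartingale T β w - (T - u) • bridgeMartingale T β u +
        ∫ r in w..u, ((T - r) / r) • bridgeMartingale T β r := by
  have hT : T ≠ 0 := by linarith
  have hdrift : ∀ r ∈ Set.uIcc w u, r⁻¹ • (bridgeBB ν T x y β r - x) =
      T⁻¹ • (y - x) + ((T - r) / r) • bridgeMartingale T β r := by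
    intro r hr
    rw [Set.uIcc_of_le hwu] at hr
    have hr0 : r ≠ 0 := (hw.trans_le hr.1).ne'
    rw [bridgeBB_of_lt (hr.2.trans_lt hu)]
    match_scalars <;> field_simp
    ring
  have hint := intervalIntegrable_sub_div_smul_bridgeMartingale hβ hw hwu hu
  rw [intervalIntegral.integral_congr hdrift, intervalIntegral.integral_add (by simp) hint,
    intervalIntegral.integral_const, bridgeBB_of_lt (hwu.trans_lt hu), bridgeBB_of_lt hu]
  match_scalars <;> field_simp <;> ring

theorem apply_bridgeBB_sub_add_apply_bridgeMartingale (hβ : ContinuousOn β (Set.Ico 0 T))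
    (hw : 0 < w) (hwu : w ≤ u) (hu : u < T) (L L' : StrongDual ℝ (Fin ν → ℝ)) :
    L (bridgeBB ν T x y β w - bridgeBB ν T x y β u +
        ∫ r in w..u, r⁻¹ • (bridgeBB ν T x y β r - x)) + L' (bridgeMartingale T β u) =
      stieltjesByParts (fun s ↦ reversalKernel T u s • L + L') (fun s ↦ -((T - s) / s) • L)
          (bridgeMartingale T β) w u +
        ((T * Real.log (u / w)) • L + L') (bridgeMartingale T β w) := by
  have hint := intervalIntegrable_sub_div_smul_bridgeMartingale hβ hw hwu hu
  have hu0 : u ≠ 0 := (hw.trans_le hwu).ne'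
  rw [bridgeBB_sub_add_integral_eq hβ hw hwu hu, map_add, ← L.intervalIntegral_comp_comm hint]
  simp only [stieltjesByParts, reversalKernel, div_self hu0, Real.log_one, map_sub, map_smul,
    FunLike.coe_smul, FunLike.coe_add, Pi.add_apply, Pi.smul_apply, smul_eq_mul, neg_mul,
    intervalIntegral.integral_neg]
  ring

end ReversedIntegrand

section BrownianMotion

variable {Ω : Type*} {m : MeasurableSpace Ω} {P : Measure Ω} {F : Filtration ℝ m}

theorem IsBrownianMotion.hasGaussianIncrements {ν : ℕ} {B : ℝ → Ω → Fin ν → ℝ}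
    (hB : IsBrownianMotion P ν F B) {I : Set ℝ} (hI : I ⊆ Set.Ici 0) :
    HasGaussianIncrements P F B id I where
  continuousOn ω := (hB.contPaths ω).mono hI
  adapted t _ := hB.adapted t
  integral_probChar_mul s hs t _ hst L Z hZ _ := by
    have hB_meas (t : ℝ) : Measurable (B t) := (hB.adapted t).mono (F.le t) le_rfl
    have hsub : Measurable fun ω ↦ B t ω - B s ω := (hB_meas t).sub (hB_meas s)
    have hchar : Measurable fun z ↦ (Real.probChar (L z) : ℂ) := by fun_prop
    have hindep : IndepFun (fun ω ↦ (Real.probChar (L (B t ω - B s ω)) : ℂ)) Z P := by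
      have hBZ : IndepFun (fun ω ↦ B t ω - B s ω) Z P :=
        (IndepFun_iff_Indep _ _ _).2 <|
          indep_of_indep_of_le_right (hB.indepIncr s t (hI hs) hst) hZ.comap_le
      exact hBZ.comp hchar measurable_id
    rw [hindep.integral_fun_mul_eq_mul_integral (hchar.comp hsub).aestronglyMeasurable
      (hZ.mono (F.le s) le_rfl).aestronglyMeasurable,
      ← charFunDual_map_eq_integral_probChar hsub.aemeasurable, hB.gaussIncr s t (hI hs) hst,
      charFunDual_pi_gaussianReal_zero, Real.coe_toNNReal _ (sub_nonneg.2 hst), id, id]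

theorem HasGaussianIncrements.bridgeMartingale [IsFiniteMeasure P] {ι : Type*} [Fintype ι]
    [DecidableEq ι] {X : ℝ → Ω → ι → ℝ} {T : ℝ}
    (h : HasGaussianIncrements P F X id (Set.Ico 0 T)) :
    HasGaussianIncrements P F (fun r ω ↦ bridgeMartingale T (fun s ↦ X s ω) r)
      (fun r ↦ (T - r)⁻¹) (Set.Ico 0 T) where
  continuousOn ω := continuousOn_bridgeMartingale (h.continuousOn ω)
  adapted r hr := by
    have hIcc : Set.Icc 0 r ⊆ Set.Ico 0 T := Set.Icc_subset_Ico_right hr.2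
    refine ((h.adapted r hr).const_smul (T - r)⁻¹).sub <|
      measurable_intervalIntegral_of_continuousOn (mΩ := F r) hr.1
        (fun s hs ↦ (h.measurable_of_le (hIcc hs) hs.2).const_smul ((T - s) ^ 2)⁻¹) fun ω ↦ ?_
    exact (continuousOn_inv_sq_const_sub.mono fun s hs ↦ (hIcc hs).2).smul
      ((h.continuousOn ω).mono hIcc)
  integral_probChar_mul u hu v hv huv L Z hZ hZ_le := by
    have hIcc : Set.Icc u v ⊆ Set.Ico 0 T := fun s hs ↦ ⟨hu.1.trans hs.1, hs.2.trans_lt hv.2⟩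
    have hinv := (continuousOn_inv_sq_const_sub (T := T)).mono fun s hs ↦ (hIcc hs).2
    have hvar : ∫ s in u..v, 1 * gaussianVariance ((T - s)⁻¹ • L) =
        ((T - v)⁻¹ - (T - u)⁻¹) * gaussianVariance L := by
      simp only [gaussianVariance_smul, one_mul, inv_pow]
      rw [intervalIntegral.integral_mul_const, integral_inv_sq_const_sub huv hv.2]
    simp only [apply_bridgeMartingale_sub (h.continuousOn _) hu.1 huv hv.2]
    rw [h.integral_probChar_stieltjesByParts_mul huv hIcc
      (fun s hs ↦ (hasDerivAt_inv_const_sub (hIcc hs).2).smul_const L)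
      (hinv.smul continuousOn_const) (fun s _ ↦ hasDerivAt_id s) continuousOn_const hZ hZ_le, hvar]

end BrownianMotion

section ReversedVariance

variable {ν : ℕ} {T u w : ℝ}

-- The antiderivative is forced: the integral of the derivative over `[s, u]` and the variance of
-- the boundary term in `M_s` must add up to `(u - s) * l ^ 2 + ((T - u)⁻¹ - T⁻¹) * l' ^ 2`.
theorem hasDerivAt_reversedVariance_sq (hu : 0 < u) {s : ℝ} (hs : 0 < s) (hsT : s < T) (l l' : ℝ) :
    HasDerivAt
      (fun s ↦ s * l ^ 2 + ((T - s)⁻¹ - T⁻¹) * (T * Real.log (u / s) * l + l') ^ 2)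
      (((T - s) ^ 2)⁻¹ * (reversalKernel T u s * l + l') ^ 2) s := by
  have hlog : HasDerivAt (fun s ↦ T * Real.log (u / s) * l + l') (-(T / s) * l) s := by
    have hk := (hasDerivAt_reversalKernel (T := T) hu hs).fun_add ((hasDerivAt_id' s).const_sub T)
    refine (((hk.congr_deriv (g' := -(T / s)) (by field_simp; ring)).mul_const l).add_const
      l').congr_of_eventuallyEq (.of_forall fun r ↦ ?_)
    simp only [reversalKernel, sub_add_cancel]
  refine (((hasDerivAt_id' s).mul_const (l ^ 2)).fun_add
    (((hasDerivAt_inv_const_sub hsT).sub_const T⁻¹).fun_mul (hlog.fun_pow 2))).congr_deriv ?_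
  have hTs : T - s ≠ 0 := (sub_pos.2 hsT).ne'
  have hT : T ≠ 0 := (hs.trans hsT).ne'
  rw [reversalKernel]
  field_simp
  ring

theorem integral_gaussianVariance_reversalKernel (hw : 0 < w) (hwu : w ≤ u) (hu : u < T)
    (L L' : StrongDual ℝ (Fin ν → ℝ)) :
    (∫ s in w..u, ((T - s) ^ 2)⁻¹ * gaussianVariance (reversalKernel T u s • L + L')) +
        ((T - w)⁻¹ - T⁻¹) * gaussianVariance ((T * Real.log (u / w)) • L + L') =
      (u - w) * gaussianVariance L + ((T - u)⁻¹ - T⁻¹) * gaussianVariance L' := by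
  have hu0 := hw.trans_le hwu
  have hderiv : ∀ s ∈ Set.Icc w u, HasDerivAt
      (fun s ↦ s * gaussianVariance L +
        ((T - s)⁻¹ - T⁻¹) * gaussianVariance ((T * Real.log (u / s)) • L + L'))
      (((T - s) ^ 2)⁻¹ * gaussianVariance (reversalKernel T u s • L + L')) s := by
    intro s hs
    have hsum := HasDerivAt.fun_sum (u := Finset.univ) fun (i : Fin ν) _ ↦
      hasDerivAt_reversedVariance_sq hu0 (hw.trans_le hs.1) (hs.2.trans_lt hu)
        (L (Pi.single i 1)) (L' (Pi.single i 1))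
    simpa [gaussianVariance, Finset.mul_sum, Finset.sum_add_distrib] using hsum
  have hkernel : ContinuousOn (reversalKernel T u) (Set.Icc w u) := HasDerivAt.continuousOn
    fun s hs ↦ hasDerivAt_reversalKernel hu0 (hw.trans_le hs.1)
  have hcont : ContinuousOn
      (fun s ↦ ((T - s) ^ 2)⁻¹ * gaussianVariance (reversalKernel T u s • L + L'))
      (Set.Icc w u) :=
    (continuousOn_inv_sq_const_sub.mono fun s hs ↦ hs.2.trans_lt hu).mul
      (continuous_gaussianVariance.comp_continuousOn
        ((hkernel.smul continuousOn_const).add continuousOn_const))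
  rw [intervalIntegral.integral_eq_sub_of_hasDerivAt (Set.uIcc_of_le hwu ▸ hderiv)
    (hcont.intervalIntegrable_of_Icc hwu), div_self hu0.ne', Real.log_one, mul_zero, zero_smul,
    zero_add]
  ring

end ReversedVariance

section ReversedIncrements

open Filter Topology

variable {Ω : Type*} {m : MeasurableSpace Ω} {ν : ℕ} {B : ℝ → Ω → Fin ν → ℝ} {T s t u w : ℝ}
  {x y : Fin ν → ℝ}

theorem measurable_bridgeHatB_sub_of_measurable_bridgeBB (hT : 0 < T)
    (hB : ∀ ω, ContinuousOn (fun u ↦ B u ω) (Set.Icc 0 T)) (hs : 0 ≤ s) (hst : s ≤ t) (ht : t < T)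
    (hb : ∀ r ∈ Set.Icc (T - t) (T - s),
      Measurable fun ω ↦ bridgeBB ν T x y (fun u ↦ B u ω) r) :
    Measurable fun ω ↦ bridgeHatB ν T x y (fun u ↦ B u ω) t -
      bridgeHatB ν T x y (fun u ↦ B u ω) s := by
  have hts : T - t ≤ T - s := sub_le_sub_left hst T
  simp only [bridgeHatB_sub hT (hB _) hs hst ht]
  refine ((hb _ (Set.left_mem_Icc.2 hts)).sub (hb _ (Set.right_mem_Icc.2 hts))).add <|
    measurable_intervalIntegral_of_continuousOn hts
      (fun r hr ↦ ((hb r hr).sub measurable_const).const_smul r⁻¹) fun ω ↦ ?_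
  exact (continuousOn_inv_smul_bridgeBB_sub hT (hB ω)).mono
    fun r hr ↦ ⟨(sub_pos.2 ht).trans_le hr.1, hr.2.trans (sub_le_self T hs)⟩

variable {P : Measure Ω} {F : Filtration ℝ m}

namespace IsBrownianMotion

theorem continuousOn_Icc (hB : IsBrownianMotion P ν F B) (ω : Ω) :
    ContinuousOn (fun u ↦ B u ω) (Set.Icc 0 T) :=
  (hB.contPaths ω).mono Set.Icc_subset_Ici_self

theorem hasGaussianIncrements_bridgeMartingale [IsFiniteMeasure P]
    (hB : IsBrownianMotion P ν F B) :
    HasGaussianIncrements P F (fun r ω ↦ bridgeMartingale T (fun u ↦ B u ω) r)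
      (fun r ↦ (T - r)⁻¹) (Set.Ico 0 T) :=
  (hB.hasGaussianIncrements Set.Ico_subset_Ici_self).bridgeMartingale

theorem measurable_bridgeBB [IsFiniteMeasure P] (hB : IsBrownianMotion P ν F B)
    (hu : u ∈ Set.Icc 0 T) :
    Measurable[F u] fun ω ↦ bridgeBB ν T x y (fun r ↦ B r ω) u := by
  rcases hu.2.lt_or_eq with huT | rfl
  · simp only [bridgeBB_of_lt huT]
    exact measurable_const.add
      ((hB.hasGaussianIncrements_bridgeMartingale.adapted u ⟨hu.1, huT⟩).const_smul (T - u))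
  · simp only [bridgeBB_self, measurable_const]

theorem measurable_bridgeHatB_sub [IsFiniteMeasure P] (hB : IsBrownianMotion P ν F B) (hT : 0 < T)
    (hs : 0 ≤ s) (hst : s ≤ t) (ht : t < T) :
    Measurable[F (T - s)] fun ω ↦ bridgeHatB ν T x y (fun u ↦ B u ω) t -
      bridgeHatB ν T x y (fun u ↦ B u ω) s :=
  measurable_bridgeHatB_sub_of_measurable_bridgeBB hT hB.continuousOn_Icc hs hst ht fun _ hr ↦
    (hB.measurable_bridgeBB ⟨(sub_pos.2 ht).le.trans hr.1, hr.2.trans (sub_le_self T hs)⟩).mono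
      (F.mono hr.2) le_rfl

variable [IsProbabilityMeasure P]

theorem integral_probChar_bridgeMartingale (hB : IsBrownianMotion P ν F B) (hu : u ∈ Set.Ico 0 T)
    (L : StrongDual ℝ (Fin ν → ℝ)) :
    ∫ ω, (Real.probChar (L (bridgeMartingale T (fun r ↦ B r ω) u)) : ℂ) ∂P =
      Complex.exp (-(((T - u)⁻¹ - T⁻¹) * gaussianVariance L / 2) : ℝ) := by
  have hM0 (ω : Ω) : bridgeMartingale T (fun r ↦ B r ω) 0 = 0 := by
    simp [bridgeMartingale, hB.start ω]
  simpa [hM0] using hB.hasGaussianIncrements_bridgeMartingale.integral_probChar_mul 0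
    (Set.left_mem_Ico.2 (hu.1.trans_lt hu.2)) u hu hu.1 L (fun _ ↦ 1) measurable_const (by simp)

theorem integral_probChar_bridgeBB_sub_add (hB : IsBrownianMotion P ν F B) (hw : 0 < w)
    (hwu : w ≤ u) (hu : u < T) (L L' : StrongDual ℝ (Fin ν → ℝ)) :
    ∫ ω, (Real.probChar
        (L (bridgeBB ν T x y (fun r ↦ B r ω) w - bridgeBB ν T x y (fun r ↦ B r ω) u +
            ∫ r in w..u, r⁻¹ • (bridgeBB ν T x y (fun r ↦ B r ω) r - x)) +
          L' (bridgeMartingale T (fun r ↦ B r ω) u)) : ℂ) ∂P =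
      Complex.exp (-(((u - w) * gaussianVariance L +
        ((T - u)⁻¹ - T⁻¹) * gaussianVariance L') / 2) : ℝ) := by
  have hIcc : Set.Icc w u ⊆ Set.Ico 0 T := fun r hr ↦ ⟨hw.le.trans hr.1, hr.2.trans_lt hu⟩
  have hpos : Set.Icc w u ⊆ Set.Ioi 0 := fun r hr ↦ hw.trans_le hr.1
  have hwT := hIcc (Set.left_mem_Icc.2 hwu)
  have hM := hB.hasGaussianIncrements_bridgeMartingale (T := T)
  set K := (T * Real.log (u / w)) • L + L'
  have hK : Measurable fun z ↦ (Real.probChar (K z) : ℂ) := by fun_prop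
  have hwiener := hM.integral_probChar_stieltjesByParts_mul hwu hIcc
    (A := fun r ↦ reversalKernel T u r • L + L')
    (fun r hr ↦ ((hasDerivAt_reversalKernel (hw.trans_le hwu) (hpos hr)).smul_const L).add_const L')
    ((continuousOn_sub_div_id.mono hpos).neg.smul continuousOn_const)
    (fun r hr ↦ hasDerivAt_inv_const_sub (hIcc hr).2)
    (continuousOn_inv_sq_const_sub.mono fun r hr ↦ (hIcc hr).2)
    (hK.comp (hM.adapted w hwT)) fun _ ↦ (Circle.norm_coe _).le
  simp only [Function.comp_apply, hB.integral_probChar_bridgeMartingale hwT K] at hwiener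
  simp only [apply_bridgeBB_sub_add_apply_bridgeMartingale ((hB.contPaths _).mono
    Set.Ico_subset_Ici_self) hw hwu hu L L', AddChar.map_add_eq_mul, Circle.coe_mul]
  refine hwiener.trans ?_
  rw [← integral_gaussianVariance_reversalKernel hw hwu hu L L', ← Complex.exp_add,
    ← Complex.ofReal_add]
  congr 2
  ring

theorem integral_probChar_bridgeHatB_sub_add (hB : IsBrownianMotion P ν F B) (hT : 0 < T)
    (hs : 0 < s) (hst : s ≤ t) (ht : t < T) (L L' : StrongDual ℝ (Fin ν → ℝ)) :
    ∫ ω, (Real.probChar (L (bridgeHatB ν T x y (fun u ↦ B u ω) t -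
        bridgeHatB ν T x y (fun u ↦ B u ω) s) +
        L' (bridgeMartingale T (fun u ↦ B u ω) (T - s))) : ℂ) ∂P =
      Complex.exp (-(((t - s) * gaussianVariance L +
        (s⁻¹ - T⁻¹) * gaussianVariance L') / 2) : ℝ) := by
  simp only [bridgeHatB_sub hT (hB.continuousOn_Icc _) hs.le hst ht]
  rw [hB.integral_probChar_bridgeBB_sub_add (sub_pos.2 ht) (sub_le_sub_left hst T)
    (sub_lt_self T hs), sub_sub_sub_cancel_left, sub_sub_cancel]

theorem integral_probChar_bridgeHatB_sub_of_pos (hB : IsBrownianMotion P ν F B) (hT : 0 < T)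
    (hs : 0 < s) (hst : s ≤ t) (ht : t < T) (L : StrongDual ℝ (Fin ν → ℝ)) :
    ∫ ω, (Real.probChar (L (bridgeHatB ν T x y (fun u ↦ B u ω) t -
        bridgeHatB ν T x y (fun u ↦ B u ω) s)) : ℂ) ∂P =
      Complex.exp (-((t - s) * gaussianVariance L / 2) : ℝ) := by
  simpa using hB.integral_probChar_bridgeHatB_sub_add (x := x) (y := y) hT hs hst ht L 0

theorem integral_probChar_bridgeHatB_sub (hB : IsBrownianMotion P ν F B) (hT : 0 < T)
    (hs : 0 ≤ s) (hst : s ≤ t) (ht : t < T) (L : StrongDual ℝ (Fin ν → ℝ)) :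
    ∫ ω, (Real.probChar (L (bridgeHatB ν T x y (fun u ↦ B u ω) t -
        bridgeHatB ν T x y (fun u ↦ B u ω) s)) : ℂ) ∂P =
      Complex.exp (-((t - s) * gaussianVariance L / 2) : ℝ) := by
  rcases hs.lt_or_eq with hs | rfl
  · exact hB.integral_probChar_bridgeHatB_sub_of_pos hT hs hst ht L
  rcases hst.lt_or_eq with ht0 | rfl
  swap
  · simp
  have hD : ∀ᶠ s in 𝓝[>] 0, Measurable fun ω ↦ L (bridgeHatB ν T x y (fun u ↦ B u ω) t -
      bridgeHatB ν T x y (fun u ↦ B u ω) s) := by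
    filter_upwards [Ioo_mem_nhdsGT ht0] with s hs
    exact L.continuous.measurable.comp
      ((hB.measurable_bridgeHatB_sub hT hs.1.le hs.2.le ht).mono (F.le _) le_rfl)
  have hD_lim (ω : Ω) : Tendsto (fun s ↦ L (bridgeHatB ν T x y (fun u ↦ B u ω) t -
      bridgeHatB ν T x y (fun u ↦ B u ω) s)) (𝓝[>] 0)
      (𝓝 (L (bridgeHatB ν T x y (fun u ↦ B u ω) t - bridgeHatB ν T x y (fun u ↦ B u ω) 0))) := by
    have hcont := continuousOn_bridgeHatB (x := x) (y := y) hT (hB.continuousOn_Icc ω) 0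
      (Set.left_mem_Ico.2 hT)
    rw [continuousWithinAt_Ico_iff_Ici hT] at hcont
    exact (L.continuous.tendsto _).comp
      (tendsto_const_nhds.sub (hcont.mono Set.Ioi_subset_Ici_self))
  have hlim := tendsto_integral_probChar_mul (P := P) (Z := fun _ ↦ 1) hD measurable_const
    (by simp) hD_lim
  simp only [mul_one] at hlim
  have hexp : Continuous fun s : ℝ ↦ Complex.exp (-((t - s) * gaussianVariance L / 2) : ℝ) := by
    fun_prop
  refine tendsto_nhds_unique hlim (((hexp.tendsto 0).mono_left nhdsWithin_le_nhds).congr' ?_)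
  filter_upwards [Ioo_mem_nhdsGT ht0] with s hs
  exact (hB.integral_probChar_bridgeHatB_sub_of_pos hT hs.1 hs.2.le ht L).symm

theorem map_bridgeHatB_sub (hB : IsBrownianMotion P ν F B) (hT : 0 < T)
    (hs : 0 ≤ s) (hst : s ≤ t) (ht : t < T) :
    P.map (fun ω ↦ bridgeHatB ν T x y (fun u ↦ B u ω) t -
        bridgeHatB ν T x y (fun u ↦ B u ω) s) =
      Measure.pi fun _ : Fin ν ↦ gaussianReal 0 (t - s).toNNReal :=
  map_eq_pi_gaussianReal_of_integral_probChar
    ((hB.measurable_bridgeHatB_sub hT hs hst ht).mono (F.le _) le_rfl) (sub_nonneg.2 hst)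
    (hB.integral_probChar_bridgeHatB_sub hT hs hst ht)

theorem indepFun_bridgeHatB_sub_bridgeBB (hB : IsBrownianMotion P ν F B) (hT : 0 < T)
    (hs : 0 ≤ s) (hst : s ≤ t) (ht : t < T) :
    IndepFun (fun ω ↦ bridgeHatB ν T x y (fun u ↦ B u ω) t -
        bridgeHatB ν T x y (fun u ↦ B u ω) s)
      (fun ω ↦ bridgeBB ν T x y (fun u ↦ B u ω) (T - s)) P := by
  rcases hs.lt_or_eq with hs | rfl
  · have huT : T - s ∈ Set.Ico 0 T := ⟨by linarith, sub_lt_self T hs⟩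
    have hM : IndepFun (fun ω ↦ bridgeHatB ν T x y (fun u ↦ B u ω) t -
        bridgeHatB ν T x y (fun u ↦ B u ω) s)
        (fun ω ↦ bridgeMartingale T (fun u ↦ B u ω) (T - s)) P := by
      refine indepFun_of_integral_probChar_add
        ((hB.measurable_bridgeHatB_sub hT hs.le hst ht).mono (F.le _) le_rfl)
        (hB.hasGaussianIncrements_bridgeMartingale.measurable huT) fun L L' ↦ ?_
      rw [hB.integral_probChar_bridgeHatB_sub_add hT hs hst ht,
        hB.integral_probChar_bridgeHatB_sub hT hs.le hst ht,
        hB.integral_probChar_bridgeMartingale huT, sub_sub_cancel, ← Complex.exp_add,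
        ← Complex.ofReal_add]
      congr 2
      ring
    simp only [bridgeBB_of_lt huT.2]
    exact hM.comp (φ := id) (ψ := fun z ↦ ((T - s) / T) • y + ((T - (T - s)) / T) • x +
      (T - (T - s)) • z) measurable_id (by fun_prop)
  · simp only [sub_zero, bridgeBB_self]
    exact indepFun_const_right _ _

end IsBrownianMotion

end ReversedIncrements

section ReversedFiltration

variable {Ω : Type*} {m : MeasurableSpace Ω} {P : Measure Ω} {ν : ℕ} {B : ℝ → Ω → Fin ν → ℝ}
  {T s t : ℝ} {x y : Fin ν → ℝ}

theorem bridgeBB_eq_restart {β : ℝ → Fin ν → ℝ} {u v : ℝ} (hβ : ContinuousOn β (Set.Ico 0 T))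
    (hu : 0 ≤ u) (huv : u ≤ v) (hv : v < T) :
    bridgeBB ν T x y β v =
      ((v - u) / (T - u)) • y + ((T - v) / (T - u)) • bridgeBB ν T x y β u + (β v - β u) -
        (T - v) • ∫ r in u..v, ((T - r) ^ 2)⁻¹ • (β r - β u) := by
  have hT : T ≠ 0 := by linarith
  have hTu : T - u ≠ 0 := by linarith
  have hTv : T - v ≠ 0 := by linarith
  have hM := bridgeMartingale_sub_eq_sub_const hβ hu huv hv (β u)
  rw [sub_self, smul_zero, sub_zero, sub_eq_iff_eq_add] at hM
  rw [bridgeBB_of_lt hv, bridgeBB_of_lt (huv.trans_lt hv), hM]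
  match_scalars <;> field_simp
  ring

theorem measurable_bridgeBB_sub_revFiltration :
    Measurable[revFiltration P ν T x y B s] fun ω ↦ bridgeBB ν T x y (fun u ↦ B u ω) (T - s) :=
  (comap_measurable _).mono (le_sup_left.trans le_sup_left) le_rfl

theorem measurable_last_sub_revFiltration {r : ℝ} (hr : r ∈ Set.Icc (T - s) T) :
    Measurable[revFiltration P ν T x y B s] fun ω ↦ B T ω - B r ω :=
  (comap_measurable _).mono
    (le_trans (le_iSup₂ (f := fun r (_ : r ∈ Set.Icc (T - s) T) ↦
      MeasurableSpace.comap (fun ω ↦ B T ω - B r ω) inferInstance) r hr)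
      (le_sup_right.trans le_sup_left)) le_rfl

theorem measurable_sub_revFiltration {r : ℝ} (hr : r ∈ Set.Icc (T - s) T) :
    Measurable[revFiltration P ν T x y B s] fun ω ↦ B r ω - B (T - s) ω := by
  have hsub := (measurable_last_sub_revFiltration (P := P) (B := B) (x := x) (y := y)
    (Set.left_mem_Icc.2 (hr.1.trans hr.2))).sub (measurable_last_sub_revFiltration hr)
  simpa only [Pi.sub_def, sub_sub_sub_cancel_left] using hsub

theorem measurable_bridgeBB_revFiltration
    (hB : ∀ ω, ContinuousOn (fun u ↦ B u ω) (Set.Ico 0 T)) (ht : t ≤ T) {r : ℝ}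
    (hr : r ∈ Set.Icc (T - t) T) :
    Measurable[revFiltration P ν T x y B t] fun ω ↦ bridgeBB ν T x y (fun u ↦ B u ω) r := by
  rcases hr.2.lt_or_eq with hrT | rfl
  swap
  · simp only [bridgeBB_self, measurable_const]
  have hu : 0 ≤ T - t := sub_nonneg.2 ht
  have hIcc : Set.Icc (T - t) r ⊆ Set.Icc (T - t) T := Set.Icc_subset_Icc_right hr.2
  have hincr (v) (hv : v ∈ Set.Icc (T - t) r) := measurable_sub_revFiltration (P := P) (B := B)
    (x := x) (y := y) (hIcc hv)
  simp only [bridgeBB_eq_restart (hB _) hu hr.1 hrT]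
  refine ((measurable_const.add (measurable_bridgeBB_sub_revFiltration.const_smul
    ((T - r) / (T - (T - t))))).add
    (hincr r (Set.right_mem_Icc.2 hr.1))).sub (Measurable.const_smul ?_ (T - r))
  refine measurable_intervalIntegral_of_continuousOn (mΩ := revFiltration P ν T x y B t) hr.1
    (fun v hv ↦ (hincr v hv).const_smul ((T - v) ^ 2)⁻¹) fun ω ↦ ?_
  exact (continuousOn_inv_sq_const_sub.mono fun v hv ↦ hv.2.trans_lt hrT).smul
    (((hB ω).mono fun v hv ↦ ⟨hu.trans hv.1, hv.2.trans_lt hrT⟩).sub continuousOn_const)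

theorem revFiltration_mono (hB : ∀ ω, ContinuousOn (fun u ↦ B u ω) (Set.Ico 0 T)) (hs : 0 ≤ s)
    (hst : s ≤ t) (ht : t ≤ T) : revFiltration P ν T x y B s ≤ revFiltration P ν T x y B t := by
  have hts : T - t ≤ T - s := sub_le_sub_left hst T
  refine sup_le (sup_le ?_ (iSup₂_le fun r hr ↦ ?_)) le_sup_right
  · exact (measurable_bridgeBB_revFiltration hB ht ⟨hts, sub_le_self T hs⟩).comap_le
  · exact (measurable_last_sub_revFiltration ⟨hts.trans hr.1, hr.2⟩).comap_le

theorem measurable_bridgeHatB_revFiltration (hT : 0 < T)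
    (hB : ∀ ω, ContinuousOn (fun u ↦ B u ω) (Set.Icc 0 T)) (hs : s ∈ Set.Ico 0 T) :
    Measurable[revFiltration P ν T x y B s] fun ω ↦ bridgeHatB ν T x y (fun u ↦ B u ω) s := by
  have hsub := measurable_bridgeHatB_sub_of_measurable_bridgeBB
    (m := revFiltration P ν T x y B s) hT hB le_rfl hs.1 hs.2 fun r hr ↦
      measurable_bridgeBB_revFiltration (fun ω ↦ (hB ω).mono Set.Ico_subset_Icc_self) hs.2.le
        ⟨hr.1, hr.2.trans (sub_le_self T le_rfl)⟩
  simpa only [bridgeHatB_zero, sub_zero] using hsub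

end ReversedFiltration

section FutureIncrements

variable {Ω : Type*} {m : MeasurableSpace Ω} {P : Measure Ω} {ν : ℕ} {F : Filtration ℝ m}
  {B : ℝ → Ω → Fin ν → ℝ} {T s t u : ℝ} {x y : Fin ν → ℝ}

namespace IsBrownianMotion

theorem comap_sub_le (hB : IsBrownianMotion P ν F B) (r s : ℝ) :
    MeasurableSpace.comap (fun ω ↦ B r ω - B s ω) inferInstance ≤ m :=
  Measurable.comap_le <|
    ((hB.adapted r).mono (F.le r) le_rfl).sub ((hB.adapted s).mono (F.le s) le_rfl)

variable [IsProbabilityMeasure P]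

theorem indep_comap_sub_sup_iSup_finset (hB : IsBrownianMotion P ν F B) (hu : 0 ≤ u) (huT : u ≤ T)
    {I : Finset ℝ} (hI : (I : Set ℝ) ⊆ Set.Icc u T) :
    Indep (MeasurableSpace.comap (fun ω ↦ B T ω - B u ω) inferInstance ⊔
      ⨆ r ∈ I, MeasurableSpace.comap (fun ω ↦ B T ω - B r ω) inferInstance) (F u) P := by
  induction I using Finset.induction_on_min generalizing u with
  | empty => simpa using hB.indepIncr u T hu huT
  | insert a J haJ ih =>
    obtain ⟨hua, haT⟩ := hI (Finset.mem_insert_self a J)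
    have hJ : (J : Set ℝ) ⊆ Set.Icc a T := fun r hr ↦
      ⟨(haJ r hr).le, (hI (Finset.mem_insert_of_mem hr)).2⟩
    have hfuture := ih (hu.trans hua) haT hJ
    have hpast : MeasurableSpace.comap (fun ω ↦ B a ω - B u ω) inferInstance ⊔ F u ≤ F a :=
      sup_le (((hB.adapted a).sub ((hB.adapted u).mono (F.mono hua) le_rfl)).comap_le)
        (F.mono hua)
    have hsup := indep_sup_left_of_indep_sup_right (hB.comap_sub_le a u)
      (sup_le (hB.comap_sub_le T a) (iSup₂_le fun r _ ↦ hB.comap_sub_le T r)) (F.le u)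
      (hB.indepIncr u a hu hua) (indep_of_indep_of_le_right hfuture hpast)
    rw [Finset.iSup_insert]
    refine indep_of_indep_of_le_left hsup (sup_le (Measurable.comap_le ?_) le_sup_right)
    have hsplit : (fun ω ↦ B T ω - B u ω) = fun ω ↦ (B T ω - B a ω) + (B a ω - B u ω) := by
      simp only [sub_add_sub_cancel]
    rw [hsplit]
    exact ((comap_measurable _).mono (le_sup_left.trans le_sup_right) le_rfl).add
      ((comap_measurable _).mono le_sup_left le_rfl)

theorem indep_iSup_comap_sub (hB : IsBrownianMotion P ν F B) (hu : 0 ≤ u) (huT : u ≤ T) :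
    Indep (⨆ r ∈ Set.Icc u T, MeasurableSpace.comap (fun ω ↦ B T ω - B r ω) inferInstance)
      (F u) P := by
  classical
  rw [iSup_eq_iSup_finset]
  refine indep_iSup_of_directed_le (fun I ↦ ?_)
    (fun I ↦ iSup₂_le fun r _ ↦ iSup_le fun _ ↦ hB.comap_sub_le T r) (F.le u)
    (Monotone.directed_le fun I J hIJ ↦ biSup_mono fun _ hr ↦ Finset.mem_of_subset hIJ hr)
  have hI : ((I.filter (· ∈ Set.Icc u T) : Finset ℝ) : Set ℝ) ⊆ Set.Icc u T :=
    fun r hr ↦ (Finset.mem_filter.1 hr).2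
  refine indep_of_indep_of_le_left (hB.indep_comap_sub_sup_iSup_finset hu huT hI)
    (le_sup_of_le_right (iSup₂_le fun r hr ↦ iSup_le fun hrI ↦ ?_))
  exact le_iSup₂_of_le r (Finset.mem_filter.2 ⟨hr, hrI⟩) le_rfl

theorem indep_bridgeHatB_sub_revFiltration (hB : IsBrownianMotion P ν F B) (hT : 0 < T)
    (hs : 0 ≤ s) (hst : s ≤ t) (ht : t < T) :
    Indep (MeasurableSpace.comap (fun ω ↦ bridgeHatB ν T x y (fun u ↦ B u ω) t -
        bridgeHatB ν T x y (fun u ↦ B u ω) s) inferInstance)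
      (revFiltration P ν T x y B s) P := by
  have hu : T - s ∈ Set.Icc 0 T := ⟨by linarith, sub_le_self T hs⟩
  have hD := (hB.measurable_bridgeHatB_sub (x := x) (y := y) hT hs hst ht).comap_le
  have hb := (hB.measurable_bridgeBB (x := x) (y := y) hu).comap_le
  have hD_le := hD.trans (F.le _)
  have hb_le := hb.trans (F.le _)
  have hfuture_le : ⨆ r ∈ Set.Icc (T - s) T,
      MeasurableSpace.comap (fun ω ↦ B T ω - B r ω) inferInstance ≤ m :=
    iSup₂_le fun r _ ↦ hB.comap_sub_le T r
  have hnull : MeasurableSpace.generateFrom {A : Set Ω | P A = 0} ≤ m :=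
    MeasurableSpace.generateFrom_le fun A hA ↦ F.le 0 _ (hB.complete 0 A hA)
  have hbD := ((IndepFun_iff_Indep _ _ _).1
    (hB.indepFun_bridgeHatB_sub_bridgeBB (x := x) (y := y) hT hs hst ht)).symm
  have hbD_future := indep_sup_left_of_indep_sup_right hb_le hfuture_le hD_le hbD
    (indep_of_indep_of_le_right (hB.indep_iSup_comap_sub hu.1 hu.2) (sup_le hb hD))
  have hbD_sup := sup_le hb_le hfuture_le
  exact (indep_sup_left_of_indep_sup_right hbD_sup hnull hD_le hbD_future
    (indep_generateFrom_null hnull (sup_le hbD_sup hD_le))).symm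

end IsBrownianMotion

end FutureIncrements

/-- Time reversal of the Brownian bridge: `(H_s)_{s∈[0,T]}` is a
filtration, `B̂` is adapted to it with continuous paths on `[0,T)` and `B̂_0 = 0` a.s.,
`B̂` is an `(H_s)`-Brownian motion (independent, centered Gaussian increments with
covariance `(t−s)·Id`), and `P`-a.s. the time-reversed bridge satisfies
`b_{T−s} = y + B̂_s + ∫₀ˢ (x − b_{T−r})/(T−r) dr` for all `s ∈ [0,T)`; i.e.
`(b_{T−s})_s` is a Brownian bridge from `y` to `x` in time `T` driven by `B̂`. -/
theorem statement14 {Ω : Type*} [m : MeasurableSpace Ω] (P : Measure Ω)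
    [IsProbabilityMeasure P] (ν : ℕ) (hν : 0 < ν) (F : Filtration ℝ m)
    (B : ℝ → Ω → Fin ν → ℝ) (hB : IsBrownianMotion P ν F B) (T : ℝ) (hT : 0 < T)
    (x y : Fin ν → ℝ) :
    (∀ s t : ℝ, 0 ≤ s → s ≤ t → t ≤ T →
      revFiltration P ν T x y B s ≤ revFiltration P ν T x y B t) ∧
    (∀ s ∈ Set.Ico (0 : ℝ) T,
      Measurable[revFiltration P ν T x y B s]
        (fun ω => bridgeHatB ν T x y (fun u => B u ω) s)) ∧
    (∀ ω, ContinuousOn (fun s => bridgeHatB ν T x y (fun u => B u ω) s) (Set.Ico 0 T)) ∧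
    (∀ᵐ ω ∂P, bridgeHatB ν T x y (fun u => B u ω) 0 = 0) ∧
    (∀ s t : ℝ, 0 ≤ s → s ≤ t → t < T →
      Indep
        (MeasurableSpace.comap
          (fun ω =>
            bridgeHatB ν T x y (fun u => B u ω) t - bridgeHatB ν T x y (fun u => B u ω) s)
          inferInstance)
        (revFiltration P ν T x y B s) P ∧
      Measure.map
          (fun ω =>
            bridgeHatB ν T x y (fun u => B u ω) t - bridgeHatB ν T x y (fun u => B u ω) s)
          P =
        Measure.pi fun _ : Fin ν => gaussianReal 0 (Real.toNNReal (t - s))) ∧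
    (∀ᵐ ω ∂P, ∀ s ∈ Set.Ico (0 : ℝ) T,
      bridgeBB ν T x y (fun u => B u ω) (T - s) =
        y + bridgeHatB ν T x y (fun u => B u ω) s +
          ∫ r in (0 : ℝ)..s,
            (T - r)⁻¹ • (x - bridgeBB ν T x y (fun u => B u ω) (T - r))) := by
  have hcont (ω : Ω) : ContinuousOn (fun u ↦ B u ω) (Set.Icc 0 T) := hB.continuousOn_Icc ω
  refine ⟨fun s t ↦ ?mono, fun s hs ↦ ?adapted, fun ω ↦ ?continuous, ?zero,
    fun s t hs hst ht ↦ ⟨?indep, ?law⟩, ?sde⟩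
  case mono => exact revFiltration_mono fun ω ↦ (hcont ω).mono Set.Ico_subset_Icc_self
  case adapted => exact measurable_bridgeHatB_revFiltration hT hcont hs
  case continuous => exact continuousOn_bridgeHatB hT (hcont ω)
  case zero => exact ae_of_all P fun _ ↦ bridgeHatB_zero
  case indep => exact hB.indep_bridgeHatB_sub_revFiltration hT hs hst ht
  case law => exact hB.map_bridgeHatB_sub hT hs hst ht
  case sde => exact ae_of_all P fun _ _ _ ↦ bridgeBB_eq_add_bridgeHatB_add_integral
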